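/- Let H be a real Hilbert space, λ ∈ ℝ, and let f : H → (-∞,∞] be proper, λ-convex and lower semicontinuous. Let δ > 0 and let γ : [0,δ] → H be absolutely continuous with I_f^δ(γ) < ∞ (so that γ(t) ∈ D(∂f) for a.e. t). Then ∫₀^δ ‖γ̇(t) − ∇f(γ(t))‖² dt = I_f^δ(γ) − 2(f(γ(δ)) − f(γ(0))). -/

import Mathlib

open Filter Topology MeasureTheory Set
open scoped ENNReal RealInnerProductSpace

noncomputable section

attribute [local instance] Classical.propDecidable

variable {H : Type*} [NormedAddCommGroup H] [InnerProductSpace ℝ H] [CompleteSpace H]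

/-- `f : H → (-∞,∞]` is proper: not identically `⊤` (and it never takes the value `⊥`). -/
def ProperFn (f : H → EReal) : Prop :=
  (∃ x, f x ≠ ⊤) ∧ ∀ x, f x ≠ ⊥

/-- `f` is `λ`-convex: `x ↦ f x - (λ/2)‖x‖²` is convex, expressed via the perturbed
convexity inequality. -/
def LambdaConvex (lam : ℝ) (f : H → EReal) : Prop :=
  ∀ x y : H, ∀ t : ℝ, 0 ≤ t → t ≤ 1 →
    f ((1 - t) • x + t • y)
      ≤ ((1 - t : ℝ) : EReal) * f x + ((t : ℝ) : EReal) * f y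
        - ((lam / 2 * (t * (1 - t)) * ‖x - y‖ ^ 2 : ℝ) : EReal)

/-- The subdifferential of a `λ`-convex function at `x` (contained in the domain of `f`). -/
def subdiff (lam : ℝ) (f : H → EReal) (x : H) : Set H :=
  {p : H | f x ≠ ⊤ ∧
    ∀ y : H, f x + ((⟪p, y - x⟫ + lam / 2 * ‖y - x‖ ^ 2 : ℝ) : EReal) ≤ f y}

/-- `∇f(x)`: the element of minimal norm of `∂f(x)` (junk value `0` if there is none). -/
def gradMin (lam : ℝ) (f : H → EReal) (x : H) : H :=
  if h : ∃ p ∈ subdiff lam f x, ∀ q ∈ subdiff lam f x, ‖p‖ ≤ ‖q‖ then h.choose else 0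

/-- `|∇f|(x) ∈ [0,∞]`, equal to `+∞` when `∂f(x) = ∅` (in particular when `f x = ⊤`). -/
def gradNorm (lam : ℝ) (f : H → EReal) (x : H) : ℝ≥0∞ :=
  if (subdiff lam f x).Nonempty then ENNReal.ofReal ‖gradMin lam f x‖ else ⊤

/-- The resolvent `J_τ(x)`: the minimizer of `y ↦ f y + ‖y-x‖²/(2τ)` (junk `0` if none). -/
def Jres (f : H → EReal) (τ : ℝ) (x : H) : H :=
  if h : ∃ y : H, ∀ z : H,
      f y + ((‖y - x‖ ^ 2 / (2 * τ) : ℝ) : EReal)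
        ≤ f z + ((‖z - x‖ ^ 2 / (2 * τ) : ℝ) : EReal)
  then h.choose else 0

/-- The Moreau–Yosida regularization `f_τ(x) = min_y (f y + ‖y-x‖²/(2τ))`. -/
def moreau (f : H → EReal) (τ : ℝ) (x : H) : ℝ :=
  (f (Jres f τ x)).toReal + ‖Jres f τ x - x‖ ^ 2 / (2 * τ)

/-- `γ` is absolutely continuous on `[a,b]` with an integrable derivative. -/
abbrev IsACCurve (a b : ℝ) (γ : ℝ → H) : Prop :=
  ∃ g : ℝ → H, IntegrableOn g (Icc a b) ∧ ∀ t ∈ Icc a b, γ t = γ a + ∫ s in a..t, g s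

/-- The action `I_f^{[a,b]}(γ) = ∫_a^b (‖γ̇‖² + |∇f|²(γ)) dt ∈ [0,∞]`, set to `+∞` when `γ`
is not absolutely continuous. -/
def actionFn (lam : ℝ) (f : H → EReal) (a b : ℝ) (γ : ℝ → H) : ℝ≥0∞ :=
  if h : IsACCurve a b γ then
    ∫⁻ t in Ioc a b, (ENNReal.ofReal (‖h.choose t‖ ^ 2) + gradNorm lam f (γ t) ^ 2)
  else ⊤

/-- `Θ_{f,x₀,x₁}`: the action on `[0,1]` with endpoint constraints. -/
def Theta (lam : ℝ) (f : H → EReal) (x0 x1 : H) (γ : ℝ → H) : ℝ≥0∞ :=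
  if γ 0 = x0 ∧ γ 1 = x1 then actionFn lam f 0 1 γ else ⊤

/-- `Γ_δ(x₀,x_δ)`: infimum of the action over curves joining the endpoints. -/
def GammaInf (lam : ℝ) (f : H → EReal) (δ : ℝ) (x0 xδ : H) : ℝ≥0∞ :=
  ⨅ (γ : ℝ → H) (_ : γ 0 = x0 ∧ γ δ = xδ), actionFn lam f 0 δ γ

/-- Mosco convergence of `fh` to `f`: recovery sequences for the strong topology, and the
`liminf` inequality along weakly convergent sequences. -/
def Mosco (fh : ℕ → H → EReal) (f : H → EReal) : Prop :=
  (∀ x : H, ∃ xh : ℕ → H, Tendsto xh atTop (𝓝 x) ∧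
      Filter.limsup (fun h => fh h (xh h)) atTop ≤ f x) ∧
  (∀ (xh : ℕ → H) (x : H),
      (∀ p : H, Tendsto (fun h => ⟪xh h, p⟫) atTop (𝓝 ⟪x, p⟫)) →
      f x ≤ Filter.liminf (fun h => fh h (xh h)) atTop)

/-! For `p ∈ ∂f(γ x)` the quadratic minorant bounds `f (γ x)` by `f (γ y)` plus terms of order
`‖γ y - γ x‖`. This controls `f ∘ γ` from one side only, for almost every `x`, in terms of some
integrable `m ≥ 0`. The estimate is chained along points approaching `s` at a geometric rate, each
chosen where `m` is at most its average, so that the errors sum up to a multiple of `∫ m`; lower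
semicontinuity then reaches `s` itself. Running this in both directions of time shows that `f ∘ γ`
is absolutely continuous. At a point of differentiability the minorant touches `f ∘ γ` from below,
so `(f ∘ γ)' = ⟪p, γ'⟫` whatever `p ∈ ∂f(γ t)` is, and the identity is the expansion of
`‖γ' - ∇f(γ)‖²`. Measurability of `|∇f| ∘ γ` comes from the lower semicontinuity of `|∇f|`, by weak
compactness of balls. -/

section Subdifferential

variable {E : Type*} [NormedAddCommGroup E] [InnerProductSpace ℝ E]
  {lam : ℝ} {f : E → EReal} {x p : E}

lemma mem_subdiff_iff_toReal (hbot : ∀ x, f x ≠ ⊥) :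
    p ∈ subdiff lam f x ↔ f x ≠ ⊤ ∧ ∀ y, f y ≠ ⊤ →
      (f x).toReal + (⟪p, y - x⟫ + lam / 2 * ‖y - x‖ ^ 2) ≤ (f y).toReal := by
  refine and_congr_right fun hx => forall_congr' fun y => ?_
  by_cases hy : f y = ⊤
  · simp [hy]
  · rw [← EReal.coe_toReal hx (hbot x), ← EReal.coe_toReal hy (hbot y)]
    simp only [← EReal.coe_add, EReal.coe_le_coe_iff, EReal.toReal_coe, ne_eq, EReal.coe_ne_top,
      not_false_eq_true, forall_const]

lemma mem_subdiff_iff_le_add :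
    p ∈ subdiff lam f x ↔ f x ≠ ⊤ ∧ ∀ y,
      f x ≤ f y + ((-(⟪p, y - x⟫ + lam / 2 * ‖y - x‖ ^ 2) : ℝ) : EReal) := by
  refine and_congr_right fun _ => forall_congr' fun y => ?_
  rw [EReal.coe_neg, ← sub_eq_add_neg,
    EReal.le_sub_iff_add_le (.inl (EReal.coe_ne_bot _)) (.inl (EReal.coe_ne_top _))]

lemma le_add_norm_mul_of_mem_subdiff (hp : p ∈ subdiff lam f x) (y : E) :
    f x ≤ f y + ((‖p‖ * ‖y - x‖ + |lam| / 2 * ‖y - x‖ ^ 2 : ℝ) : EReal) := by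
  refine ((mem_subdiff_iff_le_add.1 hp).2 y).trans
    (add_le_add_right (EReal.coe_le_coe_iff.2 ?_) _)
  have hinner : -(‖p‖ * ‖y - x‖) ≤ ⟪p, y - x⟫ := (abs_le.1 (abs_real_inner_le_norm _ _)).1
  have hquad : -|lam| / 2 * ‖y - x‖ ^ 2 ≤ lam / 2 * ‖y - x‖ ^ 2 := by
    gcongr
    exact neg_abs_le lam
  linarith

lemma subdiff_eq_iInter_halfSpace (hbot : ∀ x, f x ≠ ⊥) (hx : f x ≠ ⊤) :
    subdiff lam f x = ⋂ (y : E) (_ : f y ≠ ⊤),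
      {p | ⟪y - x, p⟫ ≤ (f y).toReal - (f x).toReal - lam / 2 * ‖y - x‖ ^ 2} := by
  ext p
  rw [mem_subdiff_iff_toReal hbot]
  simp only [hx, ne_eq, not_false_eq_true, true_and, mem_iInter, mem_ofPred_eq]
  refine forall₂_congr fun y _ => ?_
  rw [real_inner_comm]
  constructor <;> intro h <;> linarith

lemma isClosed_subdiff (hbot : ∀ x, f x ≠ ⊥) : IsClosed (subdiff lam f x) := by
  by_cases hx : f x = ⊤
  · simp [subdiff, hx]
  · rw [subdiff_eq_iInter_halfSpace hbot hx]
    exact isClosed_iInter fun y => isClosed_iInter fun _ => isClosed_le (by fun_prop) (by fun_prop)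

lemma convex_subdiff (hbot : ∀ x, f x ≠ ⊥) : Convex ℝ (subdiff lam f x) := by
  by_cases hx : f x = ⊤
  · simp [subdiff, hx, convex_empty]
  · rw [subdiff_eq_iInter_halfSpace hbot hx]
    exact convex_iInter fun y => convex_iInter fun _ =>
      convex_halfSpace_le (innerₗ E (y - x)).isLinear _

lemma mem_subdiff_of_tendsto {ι : Type*} {l : Filter ι} [l.NeBot] {y q : ι → E} {C : ℝ}
    (hlsc : LowerSemicontinuousAt f x) (hy : Tendsto y l (𝓝 x))
    (hq : ∀ᶠ i in l, q i ∈ subdiff lam f (y i)) (hC : ∀ᶠ i in l, ‖q i‖ ≤ C)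
    (hweak : ∀ v, Tendsto (fun i => ⟪q i, v⟫) l (𝓝 ⟪p, v⟫)) : p ∈ subdiff lam f x := by
  let r : E → E → E → ℝ := fun p x z => ⟪p, z - x⟫ + lam / 2 * ‖z - x‖ ^ 2
  have hyx : Tendsto (fun i => x - y i) l (𝓝 0) := by
    simpa only [sub_self] using hy.const_sub x
  have hinner : Tendsto (fun i => ⟪q i, x - y i⟫) l (𝓝 0) :=
    hyx.op_zero_isBoundedUnder_le (isBoundedUnder_of_eventually_le hC) (fun v w => ⟪w, v⟫)
      fun v w => by simpa only [mul_comm] using norm_inner_le_norm w v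
  have hr : ∀ z, Tendsto (fun i => r (q i) (y i) z) l (𝓝 (r p x z)) := fun z => by
    have hsum := (hweak (z - x)).add hinner
    simp only [← inner_add_right, sub_add_sub_cancel, add_zero] at hsum
    exact hsum.add (((hy.const_sub z).norm.pow 2).const_mul _)
  have hle : ∀ z, f x ≤ f z + (-r p x z : ℝ) := fun z => by
    have hlim : Tendsto (fun i => f z + (-r (q i) (y i) z : ℝ)) l (𝓝 (f z + (-r p x z : ℝ))) :=
      (EReal.continuousAt_add (.inr (EReal.coe_ne_bot _)) (.inr (EReal.coe_ne_top _))).tendsto.comp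
        (tendsto_const_nhds.prodMk_nhds (EReal.tendsto_coe.2 (hr z).neg))
    refine le_of_forall_lt_imp_le_of_dense fun c hc => ge_of_tendsto hlim ?_
    filter_upwards [hy (hlsc c hc), hq] with i hci hqi
    exact hci.le.trans ((mem_subdiff_iff_le_add.1 hqi).2 z)
  obtain ⟨i, hi⟩ := hq.exists
  exact mem_subdiff_iff_le_add.2
    ⟨ne_top_of_le_ne_top (EReal.add_ne_top hi.1 (EReal.coe_ne_top _)) (hle (y i)), hle⟩

lemma eq_inner_of_hasDerivAt_of_mem_subdiff (hbot : ∀ x, f x ≠ ⊥) {γ : ℝ → E} {t φ' : ℝ} {v : E}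
    (hfin : ∀ᶠ s in 𝓝 t, f (γ s) ≠ ⊤) (hφ : HasDerivAt (fun s => (f (γ s)).toReal) φ' t)
    (hγ : HasDerivAt γ v t) (hp : p ∈ subdiff lam f (γ t)) : φ' = ⟪p, v⟫ := by
  have hsub : HasDerivAt (fun s => γ s - γ t) v t := hγ.sub_const _
  have hinner : HasDerivAt (fun s => ⟪p, γ s - γ t⟫) ⟪p, v⟫ t := by
    simpa only [inner_zero_left, add_zero] using (hasDerivAt_const t p).inner ℝ hsub
  have hquad : HasDerivAt (fun s => lam / 2 * ‖γ s - γ t‖ ^ 2) 0 t := by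
    simpa only [sub_self, inner_zero_left, mul_zero] using hsub.norm_sq.const_mul (lam / 2)
  have hmin : IsLocalMin (fun s => (f (γ s)).toReal -
      (⟪p, γ s - γ t⟫ + lam / 2 * ‖γ s - γ t‖ ^ 2)) t := by
    filter_upwards [hfin] with s hs
    have := ((mem_subdiff_iff_toReal hbot).1 hp).2 _ hs
    simp only [sub_self, inner_zero_right, norm_zero]
    linarith
  have := hmin.hasDerivAt_eq_zero (hφ.sub (hinner.add hquad))
  linarith

lemma gradNorm_of_nonempty (h : (subdiff lam f x).Nonempty) :
    gradNorm lam f x = ENNReal.ofReal ‖gradMin lam f x‖ :=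
  if_pos h

lemma nonempty_subdiff_of_gradNorm_ne_top (h : gradNorm lam f x ≠ ⊤) :
    (subdiff lam f x).Nonempty := by
  by_contra hempty
  exact h (if_neg hempty)

end Subdifferential

section MinimalGradient

variable {lam : ℝ} {f : H → EReal} {x : H}

lemma exists_minimal_norm_mem_subdiff (hbot : ∀ x, f x ≠ ⊥) (hne : (subdiff lam f x).Nonempty) :
    ∃ p ∈ subdiff lam f x, ∀ q ∈ subdiff lam f x, ‖p‖ ≤ ‖q‖ := by
  obtain ⟨p, hp, hmin⟩ := exists_norm_eq_iInf_of_complete_convex hne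
    (isClosed_subdiff hbot).isComplete (convex_subdiff hbot) 0
  refine ⟨p, hp, fun q hq => ?_⟩
  simp only [zero_sub, norm_neg] at hmin
  exact hmin ▸ ciInf_le ⟨0, forall_mem_range.2 fun _ => norm_nonneg _⟩
    (⟨q, hq⟩ : subdiff lam f x)

lemma gradMin_mem_subdiff (hbot : ∀ x, f x ≠ ⊥) (hne : (subdiff lam f x).Nonempty) :
    gradMin lam f x ∈ subdiff lam f x := by
  have hex := exists_minimal_norm_mem_subdiff hbot hne
  rw [gradMin, dif_pos hex]
  exact hex.choose_spec.1

lemma norm_gradMin_le (hbot : ∀ x, f x ≠ ⊥) {q : H} (hq : q ∈ subdiff lam f x) :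
    ‖gradMin lam f x‖ ≤ ‖q‖ := by
  have hex := exists_minimal_norm_mem_subdiff hbot ⟨q, hq⟩
  rw [gradMin, dif_pos hex]
  exact hex.choose_spec.2 q hq

lemma gradNorm_le_coe_iff (hbot : ∀ x, f x ≠ ⊥) {c : NNReal} :
    gradNorm lam f x ≤ c ↔ ∃ p ∈ subdiff lam f x, ‖p‖ ≤ c := by
  unfold gradNorm
  split_ifs with hne
  · rw [ENNReal.ofReal_le_iff_le_toReal ENNReal.coe_ne_top, ENNReal.coe_toReal]
    exact ⟨fun h => ⟨_, gradMin_mem_subdiff hbot hne, h⟩,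
      fun ⟨p, hp, hpc⟩ => (norm_gradMin_le hbot hp).trans hpc⟩
  · simp [not_nonempty_iff_eq_empty.1 hne]

lemma exists_tendsto_inner_of_eventually_norm_le {ι : Type*} (u : Ultrafilter ι) {q : ι → H}
    {C : ℝ} (hq : ∀ᶠ i in (u : Filter ι), ‖q i‖ ≤ C) :
    ∃ p : H, ‖p‖ ≤ C ∧ ∀ v, Tendsto (fun i => ⟪q i, v⟫) u (𝓝 ⟪p, v⟫) := by
  let φ : ι → WeakDual ℝ H := fun i => StrongDual.toWeakDual (InnerProductSpace.toDual ℝ H (q i))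
  have hφ : ∀ᶠ i in (u : Filter ι), φ i ∈ WeakDual.toStrongDual ⁻¹' Metric.closedBall 0 C := by
    filter_upwards [hq] with i hi
    simpa [φ] using hi
  obtain ⟨ψ, hψ, hlim⟩ := (WeakDual.isCompact_closedBall 0 C).ultrafilter_le_nhds
    (u.map φ) (le_principal_iff.2 hφ)
  refine ⟨(InnerProductSpace.toDual ℝ H).symm (WeakDual.toStrongDual ψ), ?_, fun v => ?_⟩
  · simpa only [LinearIsometryEquiv.norm_map, mem_preimage, mem_closedBall_zero_iff] using hψ
  · rw [InnerProductSpace.toDual_symm_apply]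
    exact ((WeakDual.eval_continuous v).tendsto ψ).comp hlim

theorem lowerSemicontinuous_gradNorm (hbot : ∀ x, f x ≠ ⊥) (hlsc : LowerSemicontinuous f) :
    LowerSemicontinuous (gradNorm lam f) := by
  refine lowerSemicontinuous_iff_isClosed_preimage.2 fun c => ?_
  rcases eq_or_ne c ⊤ with rfl | hc
  · simp
  lift c to NNReal using hc
  refine isClosed_iff_ultrafilter.2 fun x u hux hu => ?_
  have hex : ∀ᶠ y in (u : Filter H), ∃ p ∈ subdiff lam f y, ‖p‖ ≤ c :=
    mem_of_superset hu fun y hy => (gradNorm_le_coe_iff hbot).1 hy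
  obtain ⟨q, hq⟩ := hex.choice
  obtain ⟨p, hpc, hweak⟩ :=
    exists_tendsto_inner_of_eventually_norm_le u (hq.mono fun _ h => h.2)
  exact (gradNorm_le_coe_iff hbot).2 ⟨p, mem_subdiff_of_tendsto (hlsc x) hux
    (hq.mono fun _ h => h.1) (hq.mono fun _ h => h.2) hweak, hpc⟩

end MinimalGradient

section AbsoluteContinuity

lemma absolutelyContinuousOnInterval_of_dist_le {X Y : Type*} [PseudoMetricSpace X]
    [PseudoMetricSpace Y] {φ : ℝ → X} {M : ℝ → Y} {a b K : ℝ}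
    (hM : AbsolutelyContinuousOnInterval M a b)
    (hle : ∀ x ∈ uIcc a b, ∀ y ∈ uIcc a b, dist (φ x) (φ y) ≤ K * dist (M x) (M y)) :
    AbsolutelyContinuousOnInterval φ a b := by
  unfold AbsolutelyContinuousOnInterval at hM ⊢
  have hKM := hM.const_mul K
  rw [mul_zero] at hKM
  refine squeeze_zero' (.of_forall fun _ => Finset.sum_nonneg fun _ _ => dist_nonneg) ?_ hKM
  filter_upwards [mem_inf_of_right (mem_principal_self _)] with E hE
  rw [Finset.mul_sum]
  exact Finset.sum_le_sum fun i hi =>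
    hle _ (hE.1 i hi).1 _ (hE.1 i hi).2

end AbsoluteContinuity

section OneSidedControl

lemma exists_mem_Ioc_mul_sub_le_integral {m : ℝ → ℝ} {a b : ℝ} (hab : a < b)
    (hm : IntervalIntegrable m volume a b) {P : ℝ → Prop} (hP : ∀ᵐ x, x ∈ Icc a b → P x) :
    ∃ x ∈ Ioc a b, P x ∧ m x * (b - a) ≤ ∫ r in a..b, m r := by
  have hmeas : volume.restrict (Ioc a b) ≠ 0 := by
    simpa [Measure.restrict_eq_zero] using hab
  have hP' : ∀ᵐ x ∂volume.restrict (Ioc a b), x ∈ Ioc a b ∧ P x := by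
    filter_upwards [ae_restrict_of_ae hP, ae_restrict_mem measurableSet_Ioc] with x hx hmem
    exact ⟨hmem, hx (Ioc_subset_Icc_self hmem)⟩
  obtain ⟨x, hx, hle⟩ := exists_notMem_null_le_average hmeas
    ((intervalIntegrable_iff_integrableOn_Ioc_of_le hab.le).1 hm) (ae_iff.1 hP')
  obtain ⟨hmem, hPx⟩ := not_not.1 hx
  refine ⟨x, hmem, hPx, ?_⟩
  rwa [← le_div_iff₀ (sub_pos.2 hab), ← interval_average_eq_div, uIoc_of_le hab.le]

/-- `φ` varies at most as fast as the integral of `m` on `s`, in a one-sided and pointwise form that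
is only required to hold when the left argument avoids a null set. The function `m` enters both as
a slope at that argument and through its integral. -/
def AESubordinate (φ : ℝ → EReal) (m : ℝ → ℝ) (s : Set ℝ) : Prop :=
  ∀ᵐ x, x ∈ s → ∀ y ∈ s, φ x ≤ φ y + ((m x * |y - x| + |∫ r in x..y, m r| : ℝ) : EReal)

namespace AESubordinate

variable {φ : ℝ → EReal} {m : ℝ → ℝ} {a b s t : ℝ}

lemma mono {S T : Set ℝ} (h : AESubordinate φ m T) (hST : S ⊆ T) : AESubordinate φ m S := by
  filter_upwards [h] with x hx hxS y hyS using hx (hST hxS) y (hST hyS)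

lemma comp_neg (h : AESubordinate φ m (Icc a b)) :
    AESubordinate (fun x => φ (-x)) (fun x => m (-x)) (Icc (-b) (-a)) := by
  filter_upwards [(Measure.measurePreserving_neg volume).quasiMeasurePreserving.ae h]
    with x hx hxmem y hymem
  have hneg : ∀ z ∈ Icc (-b) (-a), -z ∈ Icc a b := fun z hz =>
    ⟨le_neg_of_le_neg hz.2, neg_le_of_neg_le hz.1⟩
  have := hx (hneg x hxmem) (-y) (hneg y hymem)
  rwa [show -y - -x = -(y - x) by ring, abs_neg, intervalIntegral.integral_symm, abs_neg,
    ← intervalIntegral.integral_comp_neg] at this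

lemma exists_mem_Ioc_le_add (h : AESubordinate φ m (Icc s t))
    (hm : IntervalIntegrable m volume s t) (hm0 : ∀ x, 0 ≤ m x) {ε y : ℝ} (hε : 0 < ε)
    (hyt : y ≤ t) (hy : y ∈ Icc (s + ε) (s + 2 * ε)) :
    ∃ x ∈ Ioc (s + ε / 2) (s + ε),
      φ x ≤ φ y + ((3 * (∫ r in (s + ε / 2)..(s + ε), m r) + ∫ r in x..y, m r : ℝ) : EReal) := by
  have hle : Icc (s + ε / 2) (s + ε) ⊆ Icc s t :=
    Icc_subset_Icc (by linarith) (hy.1.trans hyt)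
  have hm' : IntervalIntegrable m volume (s + ε / 2) (s + ε) := by
    refine hm.mono_set ?_
    rwa [uIcc_of_le (by linarith), uIcc_of_le (by linarith [hy.1])]
  obtain ⟨x, hx, hφx, hmx⟩ := exists_mem_Ioc_mul_sub_le_integral (by linarith) hm'
    (Filter.Eventually.mono h fun x hx hmem => hx (hle hmem))
  have hxy : x ≤ y := hx.2.trans hy.1
  have hslope : m x * (y - x) ≤ 3 * ∫ r in (s + ε / 2)..(s + ε), m r := calc
    m x * (y - x) ≤ m x * (3 * (s + ε - (s + ε / 2))) :=
      mul_le_mul_of_nonneg_left (by linarith [hx.1, hy.2]) (hm0 x)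
    _ = 3 * (m x * (s + ε - (s + ε / 2))) := by ring
    _ ≤ 3 * ∫ r in (s + ε / 2)..(s + ε), m r := by gcongr
  refine ⟨x, hx, (hφx y ⟨by linarith [hy.1], hyt⟩).trans ?_⟩
  rw [abs_of_nonneg (sub_nonneg.2 hxy),
    abs_of_nonneg (intervalIntegral.integral_nonneg hxy fun r _ => hm0 r)]
  exact add_le_add_right (EReal.coe_le_coe_iff.2 (add_le_add_left hslope _)) _

lemma exists_mem_Icc_le_add (h : AESubordinate φ m (Icc s t)) (hst : s < t)
    (hm : IntervalIntegrable m volume s t) (hm0 : ∀ x, 0 ≤ m x) (k : ℕ) :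
    ∃ x ∈ Icc (s + (t - s) / 2 ^ k) (s + 2 * ((t - s) / 2 ^ k)), x ≤ t ∧
      φ x ≤ φ t +
        ((3 * (∫ r in (s + (t - s) / 2 ^ k)..t, m r) + ∫ r in x..t, m r : ℝ) : EReal) := by
  induction k with
  | zero =>
    exact ⟨t, by constructor <;> simp only [pow_zero, div_one] <;> linarith, le_rfl, by simp⟩
  | succ k ih =>
    obtain ⟨y, hy, hyt, hφy⟩ := ih
    set ε := (t - s) / 2 ^ k with hε
    have hε0 : 0 < ε := div_pos (sub_pos.2 hst) (by positivity)
    have hhalf : (t - s) / 2 ^ (k + 1) = ε / 2 := by rw [hε, pow_succ, div_div]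
    obtain ⟨x, hx, hφx⟩ := h.exists_mem_Ioc_le_add hm hm0 hε0 hyt hy
    have hadd : ∀ {u v}, s ≤ u → u ≤ v → v ≤ t →
        (∫ r in u..v, m r) + ∫ r in v..t, m r = ∫ r in u..t, m r := fun hu huv hv =>
      intervalIntegral.integral_add_adjacent_intervals
        (hm.mono_set (by rw [uIcc_of_le huv, uIcc_of_le hst.le]; exact Icc_subset_Icc hu hv))
        (hm.mono_set (by
          rw [uIcc_of_le hv, uIcc_of_le hst.le]; exact Icc_subset_Icc_left (hu.trans huv)))
    refine ⟨x, ?_, hx.2.trans (hy.1.trans hyt), (hφx.trans (add_le_add_left hφy _)).trans_eq ?_⟩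
    · rw [hhalf]
      exact ⟨hx.1.le, by linarith [hx.2]⟩
    · rw [hhalf, add_assoc, ← EReal.coe_add,
        ← hadd (u := s + ε / 2) (v := s + ε) (by linarith) (by linarith) (hy.1.trans hyt),
        ← hadd (u := x) (v := y) (by linarith [hx.1]) (hx.2.trans hy.1) hyt]
      congr 2
      ring

lemma le_add_integral_right (h : AESubordinate φ m (Icc s t)) (hst : s < t)
    (hm : IntervalIntegrable m volume s t) (hm0 : ∀ x, 0 ≤ m x)
    (hlsc : LowerSemicontinuousWithinAt φ (Icc s t) s) :
    φ s ≤ φ t + ((4 * ∫ r in s..t, m r : ℝ) : EReal) := by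
  choose x hx hxt hφx using h.exists_mem_Icc_le_add hst hm hm0
  have hε : ∀ k : ℕ, 0 < (t - s) / 2 ^ k := fun k => div_pos (sub_pos.2 hst) (by positivity)
  have hxs : ∀ k, s ≤ x k := fun k => by linarith [(hx k).1, hε k]
  have htendsto : Tendsto x atTop (𝓝[Icc s t] s) := by
    refine tendsto_nhdsWithin_iff.2 ⟨?_, .of_forall fun k => ⟨hxs k, hxt k⟩⟩
    have hε0 : Tendsto (fun k : ℕ => (t - s) / 2 ^ k) atTop (𝓝 0) :=
      tendsto_const_nhds.div_atTop (tendsto_pow_atTop_atTop_of_one_lt one_lt_two)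
    refine tendsto_of_tendsto_of_tendsto_of_le_of_le tendsto_const_nhds ?_ hxs fun k => (hx k).2
    simpa using (hε0.const_mul 2).const_add s
  refine lowerSemicontinuousWithinAt_iff_frequently.1 hlsc _
    (htendsto.frequently (Frequently.of_forall fun k => (hφx k).trans ?_))
  have hmono : ∀ u, s ≤ u → u ≤ t → ∫ r in u..t, m r ≤ ∫ r in s..t, m r := fun u hsu hut =>
    intervalIntegral.integral_mono_interval hsu hut le_rfl (.of_forall hm0) hm
  refine add_le_add_right (EReal.coe_le_coe_iff.2 ?_) _
  linarith [hmono _ (hxs k) (hxt k),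
    hmono (s + (t - s) / 2 ^ k) (by linarith [hε k]) ((hx k).1.trans (hxt k))]

lemma le_add_integral_left (h : AESubordinate φ m (Icc s t)) (hst : s < t)
    (hm : IntervalIntegrable m volume s t) (hm0 : ∀ x, 0 ≤ m x)
    (hlsc : LowerSemicontinuousWithinAt φ (Icc s t) t) :
    φ t ≤ φ s + ((4 * ∫ r in s..t, m r : ℝ) : EReal) := by
  have hneg : Tendsto (fun x : ℝ => -x) (𝓝[Icc (-t) (-s)] (-t)) (𝓝[Icc s t] t) := by
    have := continuous_neg.continuousWithinAt.tendsto_nhdsWithin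
      (f := fun x : ℝ => -x) (s := Icc (-t) (-s)) (t := Icc s t) (x := -t) fun x hx =>
        ⟨le_neg_of_le_neg hx.2, neg_le_of_neg_le hx.1⟩
    rwa [neg_neg] at this
  have := h.comp_neg.le_add_integral_right (neg_lt_neg hst)
    ((IntervalIntegrable.iff_comp_neg (by simp)).1 hm.symm) (fun x => hm0 _)
    fun c hc => hneg.eventually (hlsc c (by simpa only [neg_neg] using hc))
  simpa only [neg_neg, intervalIntegral.integral_comp_neg] using this

lemma le_add_abs_integral (h : AESubordinate φ m (Icc a b))
    (hm : IntervalIntegrable m volume a b) (hm0 : ∀ x, 0 ≤ m x)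
    (hlsc : LowerSemicontinuousOn φ (Icc a b)) (hs : s ∈ Icc a b) (ht : t ∈ Icc a b) :
    φ s ≤ φ t + ((4 * |∫ r in s..t, m r| : ℝ) : EReal) := by
  have hint := hm.mono_set (uIcc_subset_uIcc (Icc_subset_uIcc hs) (Icc_subset_uIcc ht))
  rcases lt_trichotomy s t with hst | rfl | hst
  · have hsub : Icc s t ⊆ Icc a b := Icc_subset_Icc hs.1 ht.2
    rw [abs_of_nonneg (intervalIntegral.integral_nonneg hst.le fun r _ => hm0 r)]
    exact (h.mono hsub).le_add_integral_right hst hint hm0 ((hlsc s hs).mono hsub)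
  · simp
  · have hsub : Icc t s ⊆ Icc a b := Icc_subset_Icc ht.1 hs.2
    rw [intervalIntegral.integral_symm, abs_neg,
      abs_of_nonneg (intervalIntegral.integral_nonneg hst.le fun r _ => hm0 r)]
    exact (h.mono hsub).le_add_integral_left hst hint.symm hm0 ((hlsc s hs).mono hsub)

lemma ne_top (h : AESubordinate φ m (Icc a b))
    (hm : IntervalIntegrable m volume a b) (hm0 : ∀ x, 0 ≤ m x)
    (hlsc : LowerSemicontinuousOn φ (Icc a b)) (hs : s ∈ Icc a b) (ht : t ∈ Icc a b)
    (hφt : φ t ≠ ⊤) : φ s ≠ ⊤ :=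
  ne_top_of_le_ne_top (EReal.add_ne_top hφt (EReal.coe_ne_top _))
    (h.le_add_abs_integral hm hm0 hlsc hs ht)

lemma absolutelyContinuousOnInterval_toReal (h : AESubordinate φ m (Icc a b)) (hab : a ≤ b)
    (hm : IntervalIntegrable m volume a b) (hm0 : ∀ x, 0 ≤ m x)
    (hlsc : LowerSemicontinuousOn φ (Icc a b)) (htop : ∀ t ∈ Icc a b, φ t ≠ ⊤)
    (hbot : ∀ t ∈ Icc a b, φ t ≠ ⊥) :
    AbsolutelyContinuousOnInterval (fun t => (φ t).toReal) a b := by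
  refine absolutelyContinuousOnInterval_of_dist_le (K := 4)
    (hm.absolutelyContinuousOnInterval_intervalIntegral (c := a) left_mem_uIcc) ?_
  rw [uIcc_of_le hab]
  have hint : ∀ {t}, t ∈ Icc a b → IntervalIntegrable m volume a t := fun ht =>
    hm.mono_set (uIcc_subset_uIcc_left (Icc_subset_uIcc ht))
  have hle : ∀ x ∈ Icc a b, ∀ y ∈ Icc a b,
      (φ x).toReal - (φ y).toReal ≤ 4 * dist (∫ r in a..x, m r) (∫ r in a..y, m r) := by
    intro x hx y hy
    have := h.le_add_abs_integral hm hm0 hlsc hx hy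
    rw [← EReal.coe_toReal (htop x hx) (hbot x hx), ← EReal.coe_toReal (htop y hy) (hbot y hy),
      ← EReal.coe_add, EReal.coe_le_coe_iff, ← intervalIntegral.integral_interval_sub_left
      (hint hy) (hint hx), ← Real.dist_eq, dist_comm] at this
    linarith
  intro x hx y hy
  rw [Real.dist_eq, abs_le]
  constructor
  · linarith [hle y hy x hx, dist_comm (∫ r in a..x, m r) (∫ r in a..y, m r)]
  · exact hle x hx y hy

end AESubordinate

end OneSidedControl


section Curves

/-- `g` is an integrable velocity field of which the curve `γ` is a primitive on `[a, b]`, so that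
`γ` is absolutely continuous; this is the condition on the witness `g` in `IsACCurve`. -/
def IsPrimitiveOn {E : Type*} [NormedAddCommGroup E] [NormedSpace ℝ E] (γ g : ℝ → E) (a b : ℝ) :
    Prop :=
  IntegrableOn g (Icc a b) ∧ ∀ t ∈ Icc a b, γ t = γ a + ∫ s in a..t, g s

namespace IsPrimitiveOn

variable {E : Type*} [NormedAddCommGroup E] [NormedSpace ℝ E] {γ g : ℝ → E} {a b : ℝ}

lemma intervalIntegrable (h : IsPrimitiveOn γ g a b) {s t : ℝ} (hs : s ∈ Icc a b)
    (ht : t ∈ Icc a b) : IntervalIntegrable g volume s t :=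
  (h.1.mono_set (uIcc_subset_Icc hs ht)).intervalIntegrable

lemma continuousOn (h : IsPrimitiveOn γ g a b) (hab : a ≤ b) : ContinuousOn γ (Icc a b) := by
  have := intervalIntegral.continuousOn_primitive_interval (a := a) (b := b)
    (by rw [uIcc_of_le hab]; exact h.1)
  rw [uIcc_of_le hab] at this
  exact (continuousOn_const.add this).congr h.2

lemma sub_eq_integral (h : IsPrimitiveOn γ g a b) {s t : ℝ} (hs : s ∈ Icc a b)
    (ht : t ∈ Icc a b) : γ t - γ s = ∫ r in s..t, g r := by
  have ha : a ∈ Icc a b := left_mem_Icc.2 (hs.1.trans hs.2)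
  rw [h.2 t ht, h.2 s hs, add_sub_add_left_eq_sub, intervalIntegral.integral_interval_sub_left
    (h.intervalIntegrable ha ht) (h.intervalIntegrable ha hs)]

lemma mul_norm_sub_le_of_forall_mul_norm_le (h : IsPrimitiveOn γ g a b) {m : ℝ → ℝ} {c k : ℝ}
    (hc : 0 ≤ c) (hk : 0 ≤ k) (hm : IntervalIntegrable m volume a b) {s t : ℝ}
    (hs : s ∈ Icc a b) (ht : t ∈ Icc a b) (hle : ∀ r, c * ‖g r‖ ≤ k + m r) :
    c * ‖γ t - γ s‖ ≤ k * |t - s| + |∫ r in s..t, m r| := by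
  have hint : IntervalIntegrable m volume s t :=
    hm.mono_set (uIcc_subset_uIcc (Icc_subset_uIcc hs) (Icc_subset_uIcc ht))
  calc c * ‖γ t - γ s‖ = ‖∫ r in s..t, c • g r‖ := by
        rw [intervalIntegral.integral_smul, norm_smul, Real.norm_of_nonneg hc,
          h.sub_eq_integral hs ht]
    _ ≤ |∫ r in s..t, (k + m r)| := by
        refine intervalIntegral.norm_integral_le_abs_of_norm_le (.of_forall fun r => ?_)
          (intervalIntegrable_const.add hint)
        rw [norm_smul, Real.norm_of_nonneg hc]
        exact hle r
    _ ≤ k * |t - s| + |∫ r in s..t, m r| := by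
        rw [intervalIntegral.integral_add intervalIntegrable_const hint,
          intervalIntegral.integral_const, smul_eq_mul]
        refine (abs_add_le _ _).trans_eq ?_
        rw [abs_mul, abs_of_nonneg hk, mul_comm]

lemma ae_mem_Ioo_and_hasDerivAt [CompleteSpace E] (h : IsPrimitiveOn γ g a b) (hab : a ≤ b) :
    ∀ᵐ t ∂volume.restrict (Ioc a b), t ∈ Ioo a b ∧ HasDerivAt γ (g t) t := by
  rw [← Measure.restrict_congr_set Ioo_ae_eq_Ioc]
  have hint := h.intervalIntegrable (left_mem_Icc.2 hab) (right_mem_Icc.2 hab)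
  filter_upwards [ae_restrict_of_ae hint.ae_hasDerivAt_integral, ae_restrict_mem measurableSet_Ioo]
    with t hderiv ht
  refine ⟨ht, ((hderiv (Icc_subset_uIcc (Ioo_subset_Icc_self ht)) a left_mem_uIcc).const_add
    (γ a)).congr_of_eventuallyEq ?_⟩
  filter_upwards [Ioo_mem_nhds ht.1 ht.2] with s hs using h.2 s (Ioo_subset_Icc_self hs)

lemma ae_eq [CompleteSpace E] {g' : ℝ → E} (h : IsPrimitiveOn γ g a b)
    (h' : IsPrimitiveOn γ g' a b) (hab : a ≤ b) : g =ᵐ[volume.restrict (Ioc a b)] g' := by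
  filter_upwards [h.ae_mem_Ioo_and_hasDerivAt hab, h'.ae_mem_Ioo_and_hasDerivAt hab] with t ht ht'
  exact ht.2.unique ht'.2

end IsPrimitiveOn

end Curves

section ChainRule

variable {E : Type*} [NormedAddCommGroup E] [InnerProductSpace ℝ E]
  {lam : ℝ} {f : E → EReal} {γ g v : ℝ → E} {a b : ℝ}

namespace IsPrimitiveOn

lemma exists_aeSubordinate_comp (h : IsPrimitiveOn γ g a b) (hab : a ≤ b)
    (hg : IntegrableOn (fun t => ‖g t‖ ^ 2) (Ioc a b))
    (hv : IntegrableOn (fun t => ‖v t‖ ^ 2) (Ioc a b))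
    (hmem : ∀ᵐ t ∂volume.restrict (Ioc a b), v t ∈ subdiff lam f (γ t)) :
    ∃ m : ℝ → ℝ, IntervalIntegrable m volume a b ∧ (∀ t, 0 ≤ m t) ∧
      AESubordinate (fun t => f (γ t)) m (Icc a b) := by
  obtain ⟨R, hR⟩ := Metric.isBounded_iff.1
    (isCompact_Icc.image_of_continuousOn (h.continuousOn hab)).isBounded
  have hγR : ∀ x ∈ Icc a b, ∀ y ∈ Icc a b, ‖γ y - γ x‖ ≤ R := fun x hx y hy => by
    rw [← dist_eq_norm]
    exact hR (mem_image_of_mem _ hy) (mem_image_of_mem _ hx)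
  have hR0 : 0 ≤ R := (norm_nonneg _).trans (hγR a (left_mem_Icc.2 hab) a (left_mem_Icc.2 hab))
  let C : ℝ := |lam| / 2 * R
  let m : ℝ → ℝ := fun t => (‖g t‖ ^ 2 + ‖v t‖ ^ 2) / 2 + C * ‖g t‖
  have hm : IntervalIntegrable m volume a b :=
    (intervalIntegrable_iff_integrableOn_Ioc_of_le hab).2
      (((hg.add hv).div_const 2).add ((h.1.mono_set Ioc_subset_Icc_self).norm.const_mul C))
  have hm0 : ∀ t, 0 ≤ m t := fun t => by positivity
  have hyoung : ∀ x r, (‖v x‖ + C) * ‖g r‖ ≤ m x + m r := fun x r => by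
    have : 0 ≤ C * ‖g x‖ := by positivity
    simp only [m]
    nlinarith [sq_nonneg (‖v x‖ - ‖g r‖), sq_nonneg ‖g x‖, sq_nonneg ‖v r‖]
  refine ⟨m, hm, hm0, ?_⟩
  rw [restrict_Ioc_eq_restrict_Icc, ae_restrict_iff' measurableSet_Icc] at hmem
  filter_upwards [hmem] with x hx hxm y hy
  refine (le_add_norm_mul_of_mem_subdiff (hx hxm) (γ y)).trans
    (add_le_add_right (EReal.coe_le_coe_iff.2 ?_) _)
  have hquad : ‖γ y - γ x‖ ^ 2 ≤ R * ‖γ y - γ x‖ := by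
    rw [pow_two]
    exact mul_le_mul_of_nonneg_right (hγR x hxm y hy) (norm_nonneg _)
  calc ‖v x‖ * ‖γ y - γ x‖ + |lam| / 2 * ‖γ y - γ x‖ ^ 2
      ≤ ‖v x‖ * ‖γ y - γ x‖ + |lam| / 2 * (R * ‖γ y - γ x‖) := by gcongr
    _ = (‖v x‖ + C) * ‖γ y - γ x‖ := by ring
    _ ≤ m x * |y - x| + |∫ r in x..y, m r| :=
      h.mul_norm_sub_le_of_forall_mul_norm_le (by positivity) (hm0 x) hm hxm hy (hyoung x)

lemma forall_ne_top_and_absolutelyContinuousOnInterval (h : IsPrimitiveOn γ g a b) (hab : a < b)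
    (hbot : ∀ x, f x ≠ ⊥) (hlsc : LowerSemicontinuous f)
    (hg : IntegrableOn (fun t => ‖g t‖ ^ 2) (Ioc a b))
    (hv : IntegrableOn (fun t => ‖v t‖ ^ 2) (Ioc a b))
    (hmem : ∀ᵐ t ∂volume.restrict (Ioc a b), v t ∈ subdiff lam f (γ t)) :
    (∀ t ∈ Icc a b, f (γ t) ≠ ⊤) ∧
      AbsolutelyContinuousOnInterval (fun t => (f (γ t)).toReal) a b := by
  obtain ⟨m, hm, hm0, hsub⟩ := h.exists_aeSubordinate_comp hab.le hg hv hmem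
  have hlsc' : LowerSemicontinuousOn (fun t => f (γ t)) (Icc a b) := fun s hs y hy =>
    h.continuousOn hab.le s hs (hlsc (γ s) y hy)
  have htop : ∀ t ∈ Icc a b, f (γ t) ≠ ⊤ := by
    have : (volume.restrict (Ioc a b)) ≠ 0 := by simpa using hab
    have : NeBot (ae (volume.restrict (Ioc a b))) := ae_neBot.2 this
    obtain ⟨s, hs, hsmem⟩ := (hmem.and (ae_restrict_mem measurableSet_Ioc)).exists
    exact fun t ht => hsub.ne_top hm hm0 hlsc' ht (Ioc_subset_Icc_self hsmem) hs.1
  exact ⟨htop, hsub.absolutelyContinuousOnInterval_toReal hab.le hm hm0 hlsc' htop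
    fun t _ => hbot _⟩

theorem integrableOn_inner_and_integral_inner_eq_sub [CompleteSpace E]
    (h : IsPrimitiveOn γ g a b) (hab : a < b)
    (hbot : ∀ x, f x ≠ ⊥) (hlsc : LowerSemicontinuous f)
    (hg : IntegrableOn (fun t => ‖g t‖ ^ 2) (Ioc a b))
    (hv : IntegrableOn (fun t => ‖v t‖ ^ 2) (Ioc a b))
    (hmem : ∀ᵐ t ∂volume.restrict (Ioc a b), v t ∈ subdiff lam f (γ t)) :
    IntegrableOn (fun t => ⟪v t, g t⟫) (Ioc a b) ∧
      ∫ t in Ioc a b, ⟪v t, g t⟫ = (f (γ b)).toReal - (f (γ a)).toReal := by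
  obtain ⟨htop, hac⟩ :=
    h.forall_ne_top_and_absolutelyContinuousOnInterval hab hbot hlsc hg hv hmem
  have hderiv : deriv (fun t => (f (γ t)).toReal) =ᵐ[volume.restrict (Ioc a b)]
      fun t => ⟪v t, g t⟫ := by
    filter_upwards [hmem, h.ae_mem_Ioo_and_hasDerivAt hab.le,
      ae_restrict_of_ae hac.ae_differentiableAt] with t hvt hγt hdiff
    obtain ⟨ht, hγt⟩ := hγt
    have hfin : ∀ᶠ s in 𝓝 t, f (γ s) ≠ ⊤ := by
      filter_upwards [Ioo_mem_nhds ht.1 ht.2] with s hs using htop s (Ioo_subset_Icc_self hs)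
    exact eq_inner_of_hasDerivAt_of_mem_subdiff hbot hfin
      (hdiff (Icc_subset_uIcc (Ioo_subset_Icc_self ht))).hasDerivAt hγt hvt
  have hint := (intervalIntegrable_iff_integrableOn_Ioc_of_le hab.le).1
    hac.intervalIntegrable_deriv
  refine ⟨hint.congr_fun_ae hderiv, ?_⟩
  rw [← integral_congr_ae hderiv, ← intervalIntegral.integral_of_le hab.le,
    hac.integral_deriv_eq_sub]

end IsPrimitiveOn

end ChainRule

section FiniteAction

variable {lam : ℝ} {f : H → EReal} {γ g : ℝ → H} {a b : ℝ}

namespace IsPrimitiveOn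

lemma actionFn_eq_lintegral (h : IsPrimitiveOn γ g a b) (hab : a ≤ b) :
    actionFn lam f a b γ =
      ∫⁻ t in Ioc a b, (ENNReal.ofReal (‖g t‖ ^ 2) + gradNorm lam f (γ t) ^ 2) := by
  have hAC : IsACCurve a b γ := ⟨g, h⟩
  rw [actionFn, dif_pos hAC]
  refine lintegral_congr_ae ?_
  filter_upwards [h.ae_eq hAC.choose_spec hab] with t ht
  rw [ht]

lemma aemeasurable_gradNorm_comp (h : IsPrimitiveOn γ g a b) (hab : a ≤ b)
    (hbot : ∀ x, f x ≠ ⊥) (hlsc : LowerSemicontinuous f) :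
    AEMeasurable (fun t => gradNorm lam f (γ t)) (volume.restrict (Ioc a b)) := by
  borelize H
  exact (lowerSemicontinuous_gradNorm hbot hlsc).measurable.comp_aemeasurable
    (((h.continuousOn hab).mono Ioc_subset_Icc_self).aemeasurable measurableSet_Ioc)

lemma aemeasurable_actionFn_integrand (h : IsPrimitiveOn γ g a b) (hab : a ≤ b)
    (hbot : ∀ x, f x ≠ ⊥) (hlsc : LowerSemicontinuous f) :
    AEMeasurable (fun t => ENNReal.ofReal (‖g t‖ ^ 2) + gradNorm lam f (γ t) ^ 2)
      (volume.restrict (Ioc a b)) :=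
  ((h.1.mono_set Ioc_subset_Icc_self).1.norm.aemeasurable.pow_const 2).ennreal_ofReal.add
    ((h.aemeasurable_gradNorm_comp hab hbot hlsc).pow_const 2)

lemma ae_nonempty_subdiff (h : IsPrimitiveOn γ g a b) (hab : a ≤ b) (hbot : ∀ x, f x ≠ ⊥)
    (hlsc : LowerSemicontinuous f) (hfin : actionFn lam f a b γ ≠ ⊤) :
    ∀ᵐ t ∂volume.restrict (Ioc a b), (subdiff lam f (γ t)).Nonempty := by
  rw [h.actionFn_eq_lintegral hab] at hfin
  filter_upwards [ae_lt_top' (h.aemeasurable_actionFn_integrand hab hbot hlsc) hfin] with t ht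
  refine nonempty_subdiff_of_gradNorm_ne_top fun htop => ?_
  simp [htop] at ht

lemma ae_toReal_actionFn_integrand (h : IsPrimitiveOn γ g a b) (hab : a ≤ b)
    (hbot : ∀ x, f x ≠ ⊥) (hlsc : LowerSemicontinuous f) (hfin : actionFn lam f a b γ ≠ ⊤) :
    (fun t => (ENNReal.ofReal (‖g t‖ ^ 2) + gradNorm lam f (γ t) ^ 2).toReal)
      =ᵐ[volume.restrict (Ioc a b)] fun t => ‖g t‖ ^ 2 + ‖gradMin lam f (γ t)‖ ^ 2 := by
  filter_upwards [h.ae_nonempty_subdiff hab hbot hlsc hfin] with t ht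
  rw [gradNorm_of_nonempty ht, ← ENNReal.ofReal_pow (norm_nonneg _),
    ← ENNReal.ofReal_add (by positivity) (by positivity), ENNReal.toReal_ofReal (by positivity)]

lemma integrableOn_norm_sq_add_norm_gradMin_sq (h : IsPrimitiveOn γ g a b) (hab : a ≤ b)
    (hbot : ∀ x, f x ≠ ⊥) (hlsc : LowerSemicontinuous f) (hfin : actionFn lam f a b γ ≠ ⊤) :
    IntegrableOn (fun t => ‖g t‖ ^ 2 + ‖gradMin lam f (γ t)‖ ^ 2) (Ioc a b) :=
  (integrable_toReal_of_lintegral_ne_top (h.aemeasurable_actionFn_integrand hab hbot hlsc)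
    (h.actionFn_eq_lintegral hab ▸ hfin)).congr
    (h.ae_toReal_actionFn_integrand hab hbot hlsc hfin)

lemma toReal_actionFn (h : IsPrimitiveOn γ g a b) (hab : a ≤ b)
    (hbot : ∀ x, f x ≠ ⊥) (hlsc : LowerSemicontinuous f) (hfin : actionFn lam f a b γ ≠ ⊤) :
    (actionFn lam f a b γ).toReal =
      ∫ t in Ioc a b, (‖g t‖ ^ 2 + ‖gradMin lam f (γ t)‖ ^ 2) := by
  have hmeas := h.aemeasurable_actionFn_integrand (lam := lam) hab hbot hlsc
  rw [← integral_congr_ae (h.ae_toReal_actionFn_integrand hab hbot hlsc hfin)]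
  rw [h.actionFn_eq_lintegral hab] at hfin ⊢
  exact (integral_toReal hmeas (ae_lt_top' hmeas hfin)).symm

lemma integrableOn_norm_sq (h : IsPrimitiveOn γ g a b) (hab : a ≤ b)
    (hbot : ∀ x, f x ≠ ⊥) (hlsc : LowerSemicontinuous f) (hfin : actionFn lam f a b γ ≠ ⊤) :
    IntegrableOn (fun t => ‖g t‖ ^ 2) (Ioc a b) := by
  refine (h.integrableOn_norm_sq_add_norm_gradMin_sq hab hbot hlsc hfin).mono'
    ((h.1.mono_set Ioc_subset_Icc_self).1.norm.pow 2) (.of_forall fun t => ?_)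
  rw [Real.norm_of_nonneg (by positivity)]
  exact le_add_of_nonneg_right (by positivity)

lemma integrableOn_norm_gradMin_sq (h : IsPrimitiveOn γ g a b) (hab : a ≤ b)
    (hbot : ∀ x, f x ≠ ⊥) (hlsc : LowerSemicontinuous f) (hfin : actionFn lam f a b γ ≠ ⊤) :
    IntegrableOn (fun t => ‖gradMin lam f (γ t)‖ ^ 2) (Ioc a b) := by
  simpa only [Pi.sub_def, add_sub_cancel_left] using
    (h.integrableOn_norm_sq_add_norm_gradMin_sq hab hbot hlsc hfin).sub
      (h.integrableOn_norm_sq hab hbot hlsc hfin)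

end IsPrimitiveOn

end FiniteAction

theorem statement15_general (lam : ℝ) (f : H → EReal) (hbot : ∀ x, f x ≠ ⊥)
    (hlsc : LowerSemicontinuous f) (a b : ℝ) (hab : a < b) (γ g : ℝ → H)
    (hγ : IsPrimitiveOn γ g a b) (hfin : actionFn lam f a b γ ≠ ⊤) :
    ∫⁻ t in Ioc a b, ENNReal.ofReal (‖g t - gradMin lam f (γ t)‖ ^ 2)
      = ENNReal.ofReal ((actionFn lam f a b γ).toReal
          - 2 * ((f (γ b)).toReal - (f (γ a)).toReal)) := by
  have hmem : ∀ᵐ t ∂volume.restrict (Ioc a b), gradMin lam f (γ t) ∈ subdiff lam f (γ t) :=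
    (hγ.ae_nonempty_subdiff hab.le hbot hlsc hfin).mono fun _ => gradMin_mem_subdiff hbot
  obtain ⟨hinner, hchain⟩ := hγ.integrableOn_inner_and_integral_inner_eq_sub hab hbot hlsc
    (hγ.integrableOn_norm_sq hab.le hbot hlsc hfin)
    (hγ.integrableOn_norm_gradMin_sq hab.le hbot hlsc hfin) hmem
  have hdensity := hγ.integrableOn_norm_sq_add_norm_gradMin_sq hab.le hbot hlsc hfin
  have hsquare : ∀ t, ‖g t - gradMin lam f (γ t)‖ ^ 2 =
      ‖g t‖ ^ 2 + ‖gradMin lam f (γ t)‖ ^ 2 - 2 * ⟪gradMin lam f (γ t), g t⟫ := fun t => by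
    rw [norm_sub_sq_real, real_inner_comm]
    ring
  rw [hγ.toReal_actionFn hab.le hbot hlsc hfin, ← hchain, ← integral_const_mul,
    ← integral_sub hdensity (hinner.const_mul 2)]
  simp only [← hsquare]
  refine (ofReal_integral_eq_lintegral_ofReal ?_ (.of_forall fun t => by positivity)).symm
  simp only [hsquare]
  exact hdensity.sub (hinner.const_mul 2)

/-- the two action functionals differ by the null Lagrangian `2(f∘γ)'`. -/
theorem statement15 (lam : ℝ) (f : H → EReal)
    (hf : ProperFn f) (hconv : LambdaConvex lam f) (hlsc : LowerSemicontinuous f)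
    (δ : ℝ) (hδ : 0 < δ) (γ : ℝ → H) (g : ℝ → H)
    (hg_int : IntegrableOn g (Icc 0 δ))
    (hg_prim : ∀ t ∈ Icc 0 δ, γ t = γ 0 + ∫ s in (0:ℝ)..t, g s)
    (hfin : actionFn lam f 0 δ γ ≠ ⊤) :
    ∫⁻ t in Ioc (0:ℝ) δ, ENNReal.ofReal (‖g t - gradMin lam f (γ t)‖ ^ 2)
      = ENNReal.ofReal ((actionFn lam f 0 δ γ).toReal
          - 2 * ((f (γ δ)).toReal - (f (γ 0)).toReal)) :=
  statement15_general lam f hf.2 hlsc 0 δ hδ γ g ⟨hg_int, hg_prim⟩ hfin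

end
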